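/- arXiv:1401.2267 — 2 statements merged into one kernel-verified Lean document; each statement's English description precedes it below -/
import Mathlib

section
/- (Proposition 1, known-variance case, coverage of the selected-model target) In the two-nested-model setting with M₁ = {1}, M₂ = {1,2}, and model selector M̂ = M₂ iff |β̂_{2·M₂}|/σ_{2·M₂} > C, the coverage probability satisfies ℙ_{μ,σ}(β_{1·M̂} ∈ β̂_{1·M̂} ± K σ_{1·M̂}) = Δ(0,K)·Δ(ζ,C) + ∫_{−K}^{K} [1 − Δ((ζ+ρz)/√(1−ρ²), C/√(1−ρ²))] φ(z) dz, where ζ = β_{2·M₂}/SD(β̂_{2·M₂}), Δ(x,c) = Φ(x+c) − Φ(x−c), and ρ is the correlation between the two components of β̂_{M₂}. -/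
open MeasureTheory ProbabilityTheory Matrix
open scoped ENNReal NNReal Classical

/-- The Gaussian linear model measure: the law of `y = μ + u`, `u ~ N(0, σ²Iₙ)`. -/
noncomputable def gaussianLinearModel {n : ℕ} (μ : Fin n → ℝ) (σ : ℝ) :
    Measure (Fin n → ℝ) :=
  Measure.pi fun i => gaussianReal (μ i) (Real.toNNReal (σ ^ 2))

/-- Standard normal cumulative distribution function `Φ`. -/
noncomputable def Phi (x : ℝ) : ℝ := ((gaussianReal 0 1) (Set.Iic x)).toReal

/-- `Δ(x, c) = Φ(x + c) − Φ(x − c)`. -/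
noncomputable def Dlt (x c : ℝ) : ℝ := Phi (x + c) - Phi (x - c)

namespace TwoNested

variable {n : ℕ}

/-- `(X'X)⁻¹` for the full model `M₂ = {1, 2}`. -/
noncomputable def Ai (X : Matrix (Fin n) (Fin 2) ℝ) : Matrix (Fin 2) (Fin 2) ℝ :=
  (Xᵀ * X)⁻¹

/-- Least-squares estimator in the full model `M₂`. -/
noncomputable def bhat2 (X : Matrix (Fin n) (Fin 2) ℝ) (y : Fin n → ℝ) : Fin 2 → ℝ :=
  (Ai X * Xᵀ) *ᵥ y

/-- Least-squares estimator in the restricted model `M₁ = {1}`. -/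
noncomputable def bhat1 (X : Matrix (Fin n) (Fin 2) ℝ) (y : Fin n → ℝ) : ℝ :=
  (∑ i, X i 0 * y i) / (∑ i, X i 0 ^ 2)

/-- `σ_{1·M₂} = σ √([(X'X)⁻¹]₁₁)`. -/
noncomputable def sd1M2 (X : Matrix (Fin n) (Fin 2) ℝ) (σ : ℝ) : ℝ :=
  σ * Real.sqrt (Ai X 0 0)

/-- `σ_{2·M₂} = σ √([(X'X)⁻¹]₂₂)`, the standard deviation of `β̂_{2·M₂}`. -/
noncomputable def sd2M2 (X : Matrix (Fin n) (Fin 2) ℝ) (σ : ℝ) : ℝ :=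
  σ * Real.sqrt (Ai X 1 1)

/-- `σ_{1·M₁} = σ √((X₁'X₁)⁻¹)`. -/
noncomputable def sd1M1 (X : Matrix (Fin n) (Fin 2) ℝ) (σ : ℝ) : ℝ :=
  σ * Real.sqrt (∑ i, X i 0 ^ 2)⁻¹

/-- The correlation `ρ` between the two components of `β̂_{M₂}`. -/
noncomputable def rho (X : Matrix (Fin n) (Fin 2) ℝ) : ℝ :=
  -(Ai X 0 1) / Real.sqrt (Ai X 0 0 * Ai X 1 1)

/-- `ζ = β_{2·M₂} / SD(β̂_{2·M₂})`. -/
noncomputable def zeta (X : Matrix (Fin n) (Fin 2) ℝ) (μ : Fin n → ℝ) (σ : ℝ) : ℝ :=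
  bhat2 X μ 1 / sd2M2 X σ

/-- The coverage event for the selected-model target `β_{1·M̂}`, where `M̂ = M₂` iff
`|β̂_{2·M₂}|/σ_{2·M₂} > C`, with interval `β̂_{1·M̂} ± K σ_{1·M̂}`. -/
def covSelEvent (X : Matrix (Fin n) (Fin 2) ℝ) (μ : Fin n → ℝ) (σ C K : ℝ) :
    Set (Fin n → ℝ) :=
  {y | if |bhat2 X y 1| / sd2M2 X σ > C
    then |bhat2 X y 0 - bhat2 X μ 0| ≤ K * sd1M2 X σ
    else |bhat1 X y - bhat1 X μ| ≤ K * sd1M1 X σ}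

/-- The coverage event for the full-model target `β_{1·M₂}`, with the same selector
and the same interval `β̂_{1·M̂} ± K σ_{1·M̂}`. -/
def covFullEvent (X : Matrix (Fin n) (Fin 2) ℝ) (μ : Fin n → ℝ) (σ C K : ℝ) :
    Set (Fin n → ℝ) :=
  {y | if |bhat2 X y 1| / sd2M2 X σ > C
    then |bhat2 X y 0 - bhat2 X μ 0| ≤ K * sd1M2 X σ
    else |bhat1 X y - bhat2 X μ 0| ≤ K * sd1M1 X σ}

end TwoNested

open TwoNested


lemma charInt (m c : ℝ) (v : ℝ≥0) :
    ∫ y, Complex.exp ((c * (y - m) : ℝ) * Complex.I) ∂(gaussianReal m v)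
      = Complex.exp (-(v * c ^ 2 / 2 : ℝ)) := by
  have h := charFun_gaussianReal (μ := m) (v := v) c
  rw [charFun_apply_real] at h
  have : ∀ y : ℝ, Complex.exp ((c * (y - m) : ℝ) * Complex.I)
      = Complex.exp (c * y * Complex.I) * Complex.exp (-(c * m * Complex.I)) := by
    intro y
    rw [← Complex.exp_add]; congr 1; push_cast; ring
  simp_rw [this]
  rw [integral_mul_const, h, ← Complex.exp_add]
  congr 1; push_cast; ring

lemma map_pair {n : ℕ} (μ : Fin n → ℝ) (σ : ℝ) (hσ : 0 < σ) (a b : Fin n → ℝ)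
    (haa : ∑ i, a i ^ 2 = 1) (hbb : ∑ i, b i ^ 2 = 1) (hab : ∑ i, a i * b i = 0) :
    (gaussianLinearModel μ σ).map
      (fun y => ((∑ i, a i * (y i - μ i)) / σ, (∑ i, b i * (y i - μ i)) / σ))
      = (gaussianReal 0 1).prod (gaussianReal 0 1) := by
  have hm : Measurable (fun y : Fin n → ℝ =>
      ((∑ i, a i * (y i - μ i)) / σ, (∑ i, b i * (y i - μ i)) / σ)) := by fun_prop
  have : IsProbabilityMeasure (gaussianLinearModel μ σ) := by
    unfold gaussianLinearModel; infer_instance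
  have := Measure.isProbabilityMeasure_map (μ := gaussianLinearModel μ σ) hm.aemeasurable
  apply Measure.ext_of_charFunDual
  ext L
  set l1 := L (1, 0) with hl1
  set l2 := L (0, 1) with hl2
  have hL : ∀ s t : ℝ, L (s, t) = l1 * s + l2 * t := by
    intro s t
    have : ((s, t) : ℝ × ℝ) = s • ((1, 0) : ℝ × ℝ) + t • ((0, 1) : ℝ × ℝ) := by simp
    rw [this, map_add, map_smul, map_smul]; simp [hl1, hl2]; ring
  have e0 : ∀ l : ℝ, ∫ y, Complex.exp ((l * y : ℝ) * Complex.I) ∂(gaussianReal 0 1)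
      = Complex.exp (-(l ^ 2 / 2 : ℝ)) := by
    intro l
    have := charInt 0 l 1
    simpa using this
  rw [charFunDual_prod]
  simp_rw [charFunDual_apply]
  rw [integral_map hm.aemeasurable (by fun_prop)]
  simp only [ContinuousLinearMap.comp_apply, ContinuousLinearMap.inl_apply,
    ContinuousLinearMap.inr_apply, hL, mul_zero, add_zero, zero_add]
  rw [e0, e0, ← Complex.exp_add]
  have key : ∀ y : Fin n → ℝ,
      Complex.exp ((l1 * ((∑ i, a i * (y i - μ i)) / σ) + l2 * ((∑ i, b i * (y i - μ i)) / σ) : ℝ)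
        * Complex.I)
      = ∏ i, Complex.exp ((((l1 * a i + l2 * b i) / σ) * (y i - μ i) : ℝ) * Complex.I) := by
    intro y
    rw [← Complex.exp_sum, ← Finset.sum_mul, ← Complex.ofReal_sum]
    congr 3
    rw [Finset.sum_div, Finset.sum_div, Finset.mul_sum, Finset.mul_sum, ← Finset.sum_add_distrib]
    refine Finset.sum_congr rfl fun i _ => ?_
    ring
  simp_rw [key]
  unfold gaussianLinearModel
  rw [integral_fintype_prod_eq_prod
    (fun i (t : ℝ) => Complex.exp ((((l1 * a i + l2 * b i) / σ) * (t - μ i) : ℝ) * Complex.I))]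
  simp_rw [charInt]
  rw [← Complex.exp_sum]
  congr 1
  rw [← Complex.ofReal_neg, ← Complex.ofReal_neg, ← Complex.ofReal_add]
  simp_rw [← Complex.ofReal_neg]
  rw [← Complex.ofReal_sum]
  congr 1
  have : ∀ i, -((Real.toNNReal (σ ^ 2) : ℝ) * ((l1 * a i + l2 * b i) / σ) ^ 2 / 2)
      = -(l1 ^ 2 / 2) * a i ^ 2 + -(l2 ^ 2 / 2) * b i ^ 2 + -(l1 * l2) * (a i * b i) := by
    intro i
    rw [Real.coe_toNNReal _ (sq_nonneg σ)]
    field_simp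
    ring
  simp_rw [this, Finset.sum_add_distrib, ← Finset.mul_sum, haa, hbb, hab]
  ring

lemma gauss_Icc (a b : ℝ) (h : a ≤ b) :
    ((gaussianReal 0 1) (Set.Icc a b)).toReal = Phi b - Phi a := by
  have : NullSingletonClass (gaussianReal 0 1) := nullSingletonClass_gaussianReal one_ne_zero
  rw [← measure_congr (Ioc_ae_eq_Icc (μ := gaussianReal 0 1))]
  have e : Set.Ioc a b = Set.Iic b \ Set.Iic a := by
    ext x; simp [and_comm]
  rw [e]
  exact measureReal_diff (Set.Iic_subset_Iic.2 h) measurableSet_Iic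

lemma meas1 (ζ C K : ℝ) : MeasurableSet {p : ℝ × ℝ | |p.1| ≤ K ∧ |ζ - p.2| ≤ C} := by
  have c1 : Continuous fun p : ℝ × ℝ => |p.1| := by fun_prop
  have c2 : Continuous fun p : ℝ × ℝ => |ζ - p.2| := by fun_prop
  exact (measurableSet_le c1.measurable measurable_const).inter
    (measurableSet_le c2.measurable measurable_const)

lemma meas2 (ζ C K ρ s : ℝ) :
    MeasurableSet {p : ℝ × ℝ | |p.1| ≤ K ∧ C < |ζ + ρ * p.1 - s * p.2|} := by
  have c1 : Continuous fun p : ℝ × ℝ => |p.1| := by fun_prop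
  have c2 : Continuous fun p : ℝ × ℝ => |ζ + ρ * p.1 - s * p.2| := by fun_prop
  exact (measurableSet_le c1.measurable measurable_const).inter
    (measurableSet_lt measurable_const c2.measurable)

lemma part1 (ζ C K : ℝ) (hC : 0 < C) (hK : 0 < K) :
    (((gaussianReal 0 1).prod (gaussianReal 0 1))
      {p : ℝ × ℝ | |p.1| ≤ K ∧ |ζ - p.2| ≤ C}).toReal = Dlt 0 K * Dlt ζ C := by
  have : {p : ℝ × ℝ | |p.1| ≤ K ∧ |ζ - p.2| ≤ C}
      = Set.Icc (0 - K) (0 + K) ×ˢ Set.Icc (ζ - C) (ζ + C) := by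
    ext p
    simp only [Set.mem_ofPred_eq, Set.mem_prod, Set.mem_Icc, abs_le]
    constructor <;> rintro ⟨⟨_, _⟩, _, _⟩ <;> refine ⟨⟨?_, ?_⟩, ?_, ?_⟩ <;> linarith
  rw [this, Measure.prod_prod, ENNReal.toReal_mul, gauss_Icc _ _ (by linarith),
    gauss_Icc _ _ (by linarith)]
  rfl

lemma part2 (ζ C K ρ s : ℝ) (hC : 0 < C) (hs : 0 < s) :
    (((gaussianReal 0 1).prod (gaussianReal 0 1))
      {p : ℝ × ℝ | |p.1| ≤ K ∧ C < |ζ + ρ * p.1 - s * p.2|}).toReal =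
    ∫ z in Set.Icc (-K) K, (1 - Dlt ((ζ + ρ * z) / s) (C / s)) * gaussianPDFReal 0 1 z := by
  have hms : MeasurableSet {p : ℝ × ℝ | |p.1| ≤ K ∧ C < |ζ + ρ * p.1 - s * p.2|} := by
    exact meas2 ζ C K ρ s
  rw [Measure.prod_apply hms, ← integral_toReal
    (measurable_measure_prodMk_left hms).aemeasurable (by simp [measure_lt_top]),
    integral_gaussianReal_eq_integral_smul one_ne_zero, ← integral_indicator measurableSet_Icc]
  congr 1
  ext z
  by_cases hz : z ∈ Set.Icc (-K) K
  · rw [Set.indicator_of_mem hz, smul_eq_mul, mul_comm]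
    congr 1
    have : Prod.mk z ⁻¹' {p : ℝ × ℝ | |p.1| ≤ K ∧ C < |ζ + ρ * p.1 - s * p.2|}
        = (Set.Icc ((ζ + ρ * z) / s - C / s) ((ζ + ρ * z) / s + C / s))ᶜ := by
      ext t
      have hz' : |z| ≤ K := abs_le.2 hz
      have e : |ζ + ρ * z - s * t| ≤ C ↔
          t ∈ Set.Icc ((ζ + ρ * z) / s - C / s) ((ζ + ρ * z) / s + C / s) := by
        rw [Set.mem_Icc, abs_le, ← sub_div, ← add_div, div_le_iff₀ hs, le_div_iff₀ hs]
        constructor <;> rintro ⟨_, _⟩ <;> constructor <;> linarith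
      rw [Set.mem_compl_iff, ← e, not_le]
      exact ⟨fun h => h.2, fun h => ⟨hz', h⟩⟩
    have hc : 0 < C / s := by positivity
    rw [this, ← measureReal_def, probReal_compl_eq_one_sub measurableSet_Icc, measureReal_def,
      gauss_Icc _ _ (by linarith)]
    rfl
  · rw [Set.indicator_of_notMem hz]
    have : Prod.mk z ⁻¹' {p : ℝ × ℝ | |p.1| ≤ K ∧ C < |ζ + ρ * p.1 - s * p.2|} = ∅ := by
      ext t
      have : ¬ |z| ≤ K := fun h => hz (abs_le.1 h)
      simp [this]
    simp [this]

/-- Scaling lemma for absolute values. -/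
lemma abs_scale (x s K : ℝ) (hs : 0 < s) : |x| ≤ K * s ↔ |x / s| ≤ K := by
  rw [abs_div, abs_of_pos hs, div_le_iff₀ hs]

lemma gram_facts {n : ℕ} (X : Matrix (Fin n) (Fin 2) ℝ) (hrank : X.rank = 2) :
    Ai X * Xᵀ * X = 1 ∧ (Ai X * Xᵀ) * (Ai X * Xᵀ)ᵀ = Ai X ∧ 0 < Ai X 0 0 ∧ 0 < Ai X 1 1 ∧
      Ai X 0 1 ^ 2 < Ai X 0 0 * Ai X 1 1 ∧ 0 < ∑ i, X i 0 ^ 2 := by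
  have hinj : Function.Injective X.mulVec := by
    rw [Matrix.mulVec_injective_iff, linearIndependent_iff_card_eq_finrank_span,
      Set.finrank, ← Matrix.rank_eq_finrank_span_cols, hrank]
    simp
  have hpd : (Xᵀ * X).PosDef := by
    have := Matrix.PosDef.conjTranspose_mul_self X hinj
    simpa using this
  have hu : IsUnit (Xᵀ * X).det := hpd.det_pos.ne'.isUnit
  have hA : (Ai X).PosDef := hpd.inv
  have hsym : (Ai X)ᵀ = Ai X := by simpa using hA.1.eq
  have hd := hA.det_pos
  rw [Matrix.det_fin_two] at hd
  have h10 : Ai X 1 0 = Ai X 0 1 := congrFun (congrFun hsym 0) 1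
  refine ⟨?_, ?_, hA.diag_pos, hA.diag_pos, ?_, ?_⟩
  · rw [Matrix.mul_assoc]; exact Matrix.nonsing_inv_mul _ hu
  · rw [Matrix.transpose_mul, hsym, Matrix.transpose_transpose, Matrix.mul_assoc,
      ← Matrix.mul_assoc Xᵀ, Ai, Matrix.mul_nonsing_inv _ hu, Matrix.mul_one]
  · rw [h10] at hd; nlinarith
  · have := hpd.diag_pos (i := 0)
    simpa [Matrix.mul_apply, pow_two] using this

theorem prop1_selected_target {n : ℕ} (X : Matrix (Fin n) (Fin 2) ℝ)
    (hrank : X.rank = 2) (μ : Fin n → ℝ) (σ : ℝ) (hσ : 0 < σ)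
    (C K : ℝ) (hC : 0 < C) (hK : 0 < K) :
    (gaussianLinearModel μ σ (covSelEvent X μ σ C K)).toReal =
      Dlt 0 K * Dlt (zeta X μ σ) C +
        ∫ z in Set.Icc (-K) K,
          (1 - Dlt ((zeta X μ σ + rho X * z) / Real.sqrt (1 - rho X ^ 2))
            (C / Real.sqrt (1 - rho X ^ 2))) * gaussianPDFReal 0 1 z := by
  obtain ⟨hBX, hBB, h0, h1, h01, hS⟩ := gram_facts X hrank
  set b : Matrix (Fin 2) (Fin n) ℝ := Ai X * Xᵀ with hb
  have hbh : ∀ y j, bhat2 X y j = ∑ i, b j i * y i := fun y j => rfl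
  have hbhd : ∀ y j, ∑ i, b j i * (y i - μ i) = bhat2 X y j - bhat2 X μ j := by
    intro y j
    simp only [hbh, mul_sub, Finset.sum_sub_distrib]
  have hG : ∀ j k, ∑ i, b j i * b k i = Ai X j k := by
    intro j k
    rw [← congrFun (congrFun hBB j) k, Matrix.mul_apply]; rfl
  have hx1 : ∑ i, b 1 i * X i 0 = 0 := by
    have := congrFun (congrFun hBX 1) 0
    rw [Matrix.mul_apply] at this
    simpa using this
  set A00 := Ai X 0 0
  set A11 := Ai X 1 1
  set A01 := Ai X 0 1
  set S := ∑ i, X i 0 ^ 2 with hSdef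
  have hr0 : 0 < √A00 := Real.sqrt_pos.2 h0
  have hr1 : 0 < √A11 := Real.sqrt_pos.2 h1
  have hrS : 0 < √S := Real.sqrt_pos.2 hS
  have q0 : √A00 ^ 2 = A00 := Real.sq_sqrt h0.le
  have q1 : √A11 ^ 2 = A11 := Real.sq_sqrt h1.le
  have qS : √S ^ 2 = S := Real.sq_sqrt hS.le
  have hrho : rho X = -A01 / (√A00 * √A11) := by
    show -A01 / √(A00 * A11) = _
    rw [Real.sqrt_mul h0.le]
  set ρ := rho X
  have hA01 : A01 = -ρ * (√A00 * √A11) := by rw [hrho]; field_simp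
  have hρ : 0 < 1 - ρ ^ 2 := by
    have : ρ ^ 2 < 1 := by
      rw [hrho, div_pow, mul_pow, q0, q1, div_lt_one (by positivity)]
      simpa using h01
    linarith
  set s := √(1 - ρ ^ 2)
  have hs : 0 < s := Real.sqrt_pos.2 hρ
  have qs : s ^ 2 = 1 - ρ ^ 2 := Real.sq_sqrt hρ.le
  have g00 : ∑ i, b 0 i ^ 2 = A00 := by simpa [pow_two] using hG 0 0
  have g11 : ∑ i, b 1 i ^ 2 = A11 := by simpa [pow_two] using hG 1 1
  have g01 : ∑ i, b 0 i * b 1 i = A01 := hG 0 1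
  -- first pair
  have m1 := map_pair μ σ hσ (fun i => X i 0 / √S) (fun i => - b 1 i / √A11)
    (by simp_rw [div_pow, ← Finset.sum_div]; rw [qS]; exact div_self hS.ne')
    (by simp_rw [div_pow, neg_sq, ← Finset.sum_div]; rw [q1, g11]; exact div_self h1.ne')
    (by
      have : ∀ i, X i 0 / √S * (-b 1 i / √A11) = -(1 / (√S * √A11)) * (b 1 i * X i 0) := by
        intro i; field_simp
      simp_rw [this, ← Finset.mul_sum, hx1]; simp)
  have m2 := map_pair μ σ hσ (fun i => - b 0 i / √A00)
    (fun i => - (b 1 i / √A11 + ρ * (b 0 i / √A00)) / s)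
    (by simp_rw [div_pow, neg_sq, ← Finset.sum_div]; rw [q0, g00]; exact div_self h0.ne')
    (by
      have : ∀ i, (- (b 1 i / √A11 + ρ * (b 0 i / √A00)) / s) ^ 2
          = (1 / (s ^ 2 * √A11 ^ 2)) * b 1 i ^ 2 + (ρ ^ 2 / (s ^ 2 * √A00 ^ 2)) * b 0 i ^ 2
            + (2 * ρ / (s ^ 2 * (√A00 * √A11))) * (b 0 i * b 1 i) := by
        intro i; field_simp; ring
      simp_rw [this, Finset.sum_add_distrib, ← Finset.mul_sum]
      rw [g00, g11, g01, hA01, q0, q1, qs]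
      field_simp
      ring)
    (by
      have : ∀ i, (-b 0 i / √A00) * (- (b 1 i / √A11 + ρ * (b 0 i / √A00)) / s)
          = (1 / (s * (√A00 * √A11))) * (b 0 i * b 1 i) + (ρ / (s * √A00 ^ 2)) * b 0 i ^ 2 := by
        intro i; field_simp
      simp_rw [this, Finset.sum_add_distrib, ← Finset.mul_sum]
      rw [g00, g01, hA01, q0]
      field_simp
      ring)
  have hζ : zeta X μ σ = bhat2 X μ 1 / (σ * √A11) := rfl
  set ζ := zeta X μ σ
  have hsd2 : sd2M2 X σ = σ * √A11 := rfl
  have hsd1 : sd1M2 X σ = σ * √A00 := rfl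
  have hsd0 : sd1M1 X σ = σ * (√S)⁻¹ := by rw [← Real.sqrt_inv]; rfl
  have p2 : 0 < σ * √A11 := by positivity
  -- the coverage event splits
  set f1 : (Fin n → ℝ) → ℝ × ℝ := fun y =>
    ((∑ i, (X i 0 / √S) * (y i - μ i)) / σ, (∑ i, (- b 1 i / √A11) * (y i - μ i)) / σ) with hf1
  set f2 : (Fin n → ℝ) → ℝ × ℝ := fun y =>
    ((∑ i, (- b 0 i / √A00) * (y i - μ i)) / σ,
      (∑ i, (- (b 1 i / √A11 + ρ * (b 0 i / √A00)) / s) * (y i - μ i)) / σ) with hf2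
  have hm1 : Measurable f1 := by fun_prop
  have hm2 : Measurable f2 := by fun_prop
  have e12 : ∀ y, ζ - (f1 y).2 = bhat2 X y 1 / (σ * √A11) := by
    intro y
    have : (f1 y).2 = -((∑ i, b 1 i * (y i - μ i)) / (σ * √A11)) := by
      simp only [hf1, Finset.sum_div, ← Finset.sum_neg_distrib]
      refine Finset.sum_congr rfl fun i _ => ?_
      field_simp
    rw [this, hbhd, hζ]; ring
  have e11 : ∀ y, (f1 y).1 = (bhat1 X y - bhat1 X μ) / (σ * (√S)⁻¹) := by
    intro y
    have h2 : bhat1 X y - bhat1 X μ = (∑ i, X i 0 * (y i - μ i)) / S := by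
      simp only [mul_sub, Finset.sum_sub_distrib, sub_div]; rfl
    rw [h2]
    have h3 : (f1 y).1 = (∑ i, X i 0 * (y i - μ i)) / (σ * √S) := by
      simp only [hf1, Finset.sum_div]
      refine Finset.sum_congr rfl fun i _ => ?_
      field_simp
    rw [h3]
    nth_rewrite 2 [← qS]
    field_simp
  have e21 : ∀ y, (f2 y).1 = -((bhat2 X y 0 - bhat2 X μ 0) / (σ * √A00)) := by
    intro y
    rw [← hbhd]
    simp only [hf2, Finset.sum_div, ← Finset.sum_neg_distrib]
    refine Finset.sum_congr rfl fun i _ => ?_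
    field_simp
  have e22 : ∀ y, ζ + ρ * (f2 y).1 - s * (f2 y).2 = bhat2 X y 1 / (σ * √A11) := by
    intro y
    have : s * (f2 y).2 = -((bhat2 X y 1 - bhat2 X μ 1) / (σ * √A11))
        - ρ * ((bhat2 X y 0 - bhat2 X μ 0) / (σ * √A00)) := by
      rw [← hbhd, ← hbhd]
      simp only [hf2, Finset.sum_div, Finset.mul_sum, ← Finset.sum_neg_distrib,
        ← Finset.sum_sub_distrib]
      refine Finset.sum_congr rfl fun i _ => ?_
      field_simp
      ring
    rw [this, e21, hζ]; ring
  have hev : covSelEvent X μ σ C K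
      = f1 ⁻¹' {p : ℝ × ℝ | |p.1| ≤ K ∧ |ζ - p.2| ≤ C} ∪
        f2 ⁻¹' {p : ℝ × ℝ | |p.1| ≤ K ∧ C < |ζ + ρ * p.1 - s * p.2|} := by
    ext y
    simp only [covSelEvent, Set.mem_ofPred_eq, Set.mem_union, Set.mem_preimage, e12, e11, e22,
      hsd0, hsd1, hsd2]
    rw [e21, abs_neg, abs_scale _ _ _ (by positivity : 0 < σ * √A00),
      abs_scale _ _ _ (by positivity : 0 < σ * (√S)⁻¹),
      abs_div (bhat2 X y 1), abs_of_pos p2]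
    by_cases h : |bhat2 X y 1| / (σ * √A11) > C
    · simp [h, not_le.2 h]
    · simp [h, not_lt.1 h]
  have hms1 : MeasurableSet {p : ℝ × ℝ | |p.1| ≤ K ∧ |ζ - p.2| ≤ C} := by
    exact meas1 ζ C K
  have hms2 : MeasurableSet {p : ℝ × ℝ | |p.1| ≤ K ∧ C < |ζ + ρ * p.1 - s * p.2|} := by
    exact meas2 ζ C K ρ s
  have hdisj : Disjoint (f1 ⁻¹' {p : ℝ × ℝ | |p.1| ≤ K ∧ |ζ - p.2| ≤ C})
      (f2 ⁻¹' {p : ℝ × ℝ | |p.1| ≤ K ∧ C < |ζ + ρ * p.1 - s * p.2|}) := by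
    rw [Set.disjoint_left]
    rintro y ⟨_, hy1⟩ ⟨_, hy2⟩
    rw [e12] at hy1
    rw [e22] at hy2
    linarith
  have : IsProbabilityMeasure (gaussianLinearModel μ σ) := by
    unfold gaussianLinearModel; infer_instance
  rw [hev, measure_union hdisj (hm2 hms2), ENNReal.toReal_add (measure_ne_top _ _)
    (measure_ne_top _ _), ← Measure.map_apply hm1 hms1, ← Measure.map_apply hm2 hms2, m1, m2,
    part1 ζ C K hC hK, part2 ζ C K ρ s hC hs]
end

section
/- (Proposition 1, known-variance case, coverage of the full-model target) In the two-nested-model setting, ℙ_{μ,σ}(β_{1·M₂} ∈ β̂_{1·M̂} ± K σ_{1·M̂}) = ℙ_{μ,σ}(β_{1·M̂} ∈ β̂_{1·M̂} ± K σ_{1·M̂}) + [Δ(ρζ/√(1−ρ²), K) − Δ(0, K)]·Δ(ζ, C), with notation as in the companion formula. -/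
open MeasureTheory ProbabilityTheory Matrix
open scoped ENNReal NNReal Classical

open TwoNested

theorem interval_prob (m t s K : ℝ) (hs : 0 < s) (hK : 0 < K) :
    (gaussianReal m (Real.toNNReal (s ^ 2)) {x | |x - t| ≤ K * s}).toReal =
      Dlt ((m - t) / s) K := by
  have hmap : gaussianReal m (Real.toNNReal (s ^ 2)) =
      (gaussianReal 0 1).map (fun x => m + (-s) * x) := by
    have h1 := gaussianReal_map_const_mul (μ := 0) (v := 1) (-s)
    have h2 := gaussianReal_map_const_add (μ := -s * 0)
      (v := NNReal.mk ((-s) ^ 2) (sq_nonneg _) * 1) m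
    rw [← h1, Measure.map_map (by fun_prop) (by fun_prop)] at h2
    have : (fun x => m + (-s) * x) = (fun x => m + x) ∘ (fun x => -s * x) := rfl
    rw [this, h2]
    congr 1
    · ring
    · ext
      simp [sq_nonneg]
  have hmeas : MeasurableSet {x : ℝ | |x - t| ≤ K * s} :=
    measurableSet_le (by fun_prop) (by fun_prop)
  rw [hmap, Measure.map_apply (by fun_prop) hmeas]
  set e := (m - t) / s with he
  have hes : e * s = m - t := by rw [he]; field_simp
  have hset : (fun x => m + (-s) * x) ⁻¹' {x | |x - t| ≤ K * s} = Set.Icc (e - K) (e + K) := by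
    ext x
    simp only [Set.mem_preimage, Set.mem_ofPred_eq, Set.mem_Icc]
    have h0 : m + -s * x - t = (e - x) * s := by linarith
    rw [h0, abs_mul, abs_of_pos hs, mul_le_mul_iff_left₀ hs, abs_le]
    constructor <;> rintro ⟨h1, h2⟩ <;> constructor <;> linarith
  have hna : NullSingletonClass (gaussianReal 0 1) := nullSingletonClass_gaussianReal one_ne_zero
  rw [hset, measure_congr (Ioc_ae_eq_Icc (μ := gaussianReal 0 1)).symm]
  unfold Dlt Phi
  have hdiff : Set.Ioc (e - K) (e + K) = Set.Iic (e + K) \ Set.Iic (e - K) := by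
    ext x
    simp only [Set.mem_Ioc, Set.mem_sdiff, Set.mem_Iic, not_le]
    tauto
  rw [hdiff, measure_sdiff (Set.Iic_subset_Iic.2 (by linarith))
    measurableSet_Iic.nullMeasurableSet (measure_ne_top _ _),
    ENNReal.toReal_sub_of_le (measure_mono (Set.Iic_subset_Iic.2 (by linarith)))
      (measure_ne_top _ _)]

theorem model_gaussian {n : ℕ} (μ : Fin n → ℝ) (σ : ℝ) :
    HasGaussianLaw (fun y : Fin n → ℝ => y) (gaussianLinearModel μ σ) := by
  have h : iIndepFun (fun (i : Fin n) (y : Fin n → ℝ) => y i) (gaussianLinearModel μ σ) :=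
    iIndepFun_pi (X := fun _ x => x) (fun i => by fun_prop)
  refine h.hasGaussianLaw fun i => ⟨?_⟩
  rw [gaussianLinearModel, (measurePreserving_eval _ i).map_eq]
  infer_instance

instance {n : ℕ} (μ : Fin n → ℝ) (σ : ℝ) : IsProbabilityMeasure (gaussianLinearModel μ σ) := by
  unfold gaussianLinearModel; infer_instance

theorem model_memLp {n : ℕ} (μ : Fin n → ℝ) (σ : ℝ) (i : Fin n) (c : ℝ) :
    MemLp (fun y : Fin n → ℝ => c * y i) 2 (gaussianLinearModel μ σ) := by
  refine MemLp.const_mul ?_ c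
  have h := measurePreserving_eval (fun i => gaussianReal (μ i) (Real.toNNReal (σ ^ 2))) i
  exact (memLp_id_gaussianReal (μ := μ i) (v := Real.toNNReal (σ ^ 2)) 2).comp_measurePreserving h

theorem model_cov {n : ℕ} (μ : Fin n → ℝ) (σ : ℝ) (u v : Fin n → ℝ) :
    cov[fun y => ∑ i, u i * y i, fun y => ∑ i, v i * y i; gaussianLinearModel μ σ] =
      σ ^ 2 * ∑ i, u i * v i := by
  rw [covariance_fun_sum_fun_sum (fun i => model_memLp μ σ i _) (fun i => model_memLp μ σ i _),
    Finset.mul_sum]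
  refine Finset.sum_congr rfl fun i _ => ?_
  rw [Finset.sum_eq_single i]
  · rw [covariance_const_mul_left, covariance_const_mul_right, covariance_self (Measurable.aemeasurable (by fun_prop))]
    have h := measurePreserving_eval (fun i => gaussianReal (μ i) (Real.toNNReal (σ ^ 2))) i
    have h2 : Var[fun y : Fin n → ℝ => y i; gaussianLinearModel μ σ] = σ ^ 2 := by
      have := h.variance_fun_comp (f := fun x : ℝ => x) (by fun_prop)
      rw [gaussianLinearModel]
      refine this.trans ?_
      rw [variance_fun_id_gaussianReal]
      simp [sq_nonneg]
    rw [h2]; ring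
  · intro j _ hj
    have h : iIndepFun (fun (i : Fin n) (y : Fin n → ℝ) => y i) (gaussianLinearModel μ σ) :=
      iIndepFun_pi (X := fun _ x => x) (fun i => by fun_prop)
    rw [covariance_const_mul_left, covariance_const_mul_right,
      (h.indepFun hj.symm).covariance_eq_zero]
    · ring
    · simpa using model_memLp μ σ i 1
    · simpa using model_memLp μ σ j 1
  · simp

theorem model_joint {n : ℕ} (μ : Fin n → ℝ) (σ : ℝ) (u v : Fin n → ℝ) :
    HasGaussianLaw (fun y : Fin n → ℝ => (∑ i, u i * y i, ∑ i, v i * y i))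
      (gaussianLinearModel μ σ) := by
  let T (u : Fin n → ℝ) : (Fin n → ℝ) →L[ℝ] ℝ := ∑ i, u i • ContinuousLinearMap.proj i
  have h := (model_gaussian μ σ).map ((T u).prod (T v))
  have he : (fun y : Fin n → ℝ => (∑ i, u i * y i, ∑ i, v i * y i)) =
      ((T u).prod (T v)) ∘ fun y => y := by
    ext y <;> simp [T]
  rw [he]
  exact h

theorem model_mean {n : ℕ} (μ : Fin n → ℝ) (σ : ℝ) (u : Fin n → ℝ) :
    ∫ y, ∑ i, u i * y i ∂(gaussianLinearModel μ σ) = ∑ i, u i * μ i := by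
  rw [integral_finsetSum _ fun i _ => (model_memLp μ σ i _).integrable (by norm_num)]
  refine Finset.sum_congr rfl fun i _ => ?_
  rw [integral_const_mul]
  congr 1
  have h := measurePreserving_eval (fun i => gaussianReal (μ i) (Real.toNNReal (σ ^ 2))) i
  have := integral_map (μ := gaussianLinearModel μ σ) (φ := fun y => y i) (f := fun x : ℝ => x)
    (Measurable.aemeasurable (by fun_prop)) (by fun_prop)
  rw [← this, gaussianLinearModel]
  refine (congrArg (fun m => ∫ x, x ∂m) h.map_eq).trans ?_
  simp

theorem model_law {n : ℕ} (μ : Fin n → ℝ) (σ : ℝ) (u : Fin n → ℝ) :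
    (gaussianLinearModel μ σ).map (fun y => ∑ i, u i * y i) =
      gaussianReal (∑ i, u i * μ i) (Real.toNNReal (σ ^ 2 * ∑ i, u i * u i)) := by
  rw [(model_joint μ σ u u).fst.map_eq_gaussianReal, model_mean, ← model_cov μ σ u u,
    covariance_self (Measurable.aemeasurable (by fun_prop))]

theorem model_prod {n : ℕ} (μ : Fin n → ℝ) (σ : ℝ) (u v : Fin n → ℝ)
    (huv : ∑ i, u i * v i = 0) (A B : Set ℝ) (hA : MeasurableSet A) (hB : MeasurableSet B) :
    (gaussianLinearModel μ σ {y | ∑ i, u i * y i ∈ A ∧ ∑ i, v i * y i ∈ B}).toReal =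
      (gaussianReal (∑ i, u i * μ i) (Real.toNNReal (σ ^ 2 * ∑ i, u i * u i)) A).toReal *
      (gaussianReal (∑ i, v i * μ i) (Real.toNNReal (σ ^ 2 * ∑ i, v i * v i)) B).toReal := by
  have hi := (model_joint μ σ u v).indepFun_of_covariance_eq_zero (by
    rw [model_cov, huv, mul_zero])
  rw [← model_law, ← model_law, Measure.map_apply (by fun_prop) hA,
    Measure.map_apply (by fun_prop) hB, ← ENNReal.toReal_mul,
    ← hi.measure_inter_preimage_eq_mul A B hA hB]
  rfl

theorem gram_pos {n : ℕ} (X : Matrix (Fin n) (Fin 2) ℝ) (hrank : X.rank = 2) :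
    0 < (∑ i, X i 0 ^ 2) * (∑ i, X i 1 ^ 2) - (∑ i, X i 0 * X i 1) ^ 2 := by
  have hcs := Finset.sum_mul_sq_le_sq_mul_sq Finset.univ (fun i => X i 0) (fun i => X i 1)
  have hdet : (Xᵀ * X).det = (∑ i, X i 0 ^ 2) * (∑ i, X i 1 ^ 2) - (∑ i, X i 0 * X i 1) ^ 2 := by
    rw [Matrix.det_fin_two]
    simp only [Matrix.mul_apply, Matrix.transpose_apply]
    simp only [← pow_two, mul_comm (X _ 1) (X _ 0)]
  have hne : (Xᵀ * X).det ≠ 0 := by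
    intro h0
    have hr : (Xᵀ * X).rank = 2 := by rw [Matrix.rank_transpose_mul_self, hrank]
    obtain ⟨v, hv, hv0⟩ := Matrix.exists_mulVec_eq_zero_iff.2 h0
    have hrn := LinearMap.finrank_range_add_finrank_ker (Xᵀ * X).mulVecLin
    rw [← Matrix.rank, hr] at hrn
    rw [Module.finrank_fin_fun] at hrn
    have hk : Module.finrank ℝ (LinearMap.ker (Xᵀ * X).mulVecLin) = 0 := by omega
    rw [Submodule.finrank_eq_zero, LinearMap.ker_eq_bot'] at hk
    exact hv (hk v hv0)
  rw [hdet] at hne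
  exact lt_of_le_of_ne (by linarith) (Ne.symm hne)

theorem Ai_eq {n : ℕ} (X : Matrix (Fin n) (Fin 2) ℝ) {a b c : ℝ} (ha : ∑ i, X i 0 ^ 2 = a)
    (hb : ∑ i, X i 0 * X i 1 = b) (hc : ∑ i, X i 1 ^ 2 = c) :
    Ai X = !![c / (a * c - b ^ 2), -b / (a * c - b ^ 2);
      -b / (a * c - b ^ 2), a / (a * c - b ^ 2)] := by
  have hg : Xᵀ * X = !![a, b; b, c] := by
    ext i j
    fin_cases i <;> fin_cases j <;>
      simp [Matrix.mul_apply, ← ha, ← hb, ← hc, pow_two, mul_comm]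
  rw [Ai, hg, Matrix.inv_def, Matrix.adjugate_fin_two_of, Matrix.det_fin_two_of]
  ext i j
  fin_cases i <;> fin_cases j <;> simp [pow_two, div_eq_inv_mul]

/-- Proposition 1, known variance, full-model target: in the
two-nested-model setting,
`ℙ_{μ,σ}(β_{1·M₂} ∈ β̂_{1·M̂} ± K σ_{1·M̂}) = ℙ_{μ,σ}(β_{1·M̂} ∈ β̂_{1·M̂} ± K σ_{1·M̂})
+ [Δ(ρζ/√(1−ρ²), K) − Δ(0, K)]·Δ(ζ, C)`. -/
theorem prop1_full_target {n : ℕ} (X : Matrix (Fin n) (Fin 2) ℝ)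
    (hrank : X.rank = 2) (μ : Fin n → ℝ) (σ : ℝ) (hσ : 0 < σ)
    (C K : ℝ) (hC : 0 < C) (hK : 0 < K) :
    (gaussianLinearModel μ σ (covFullEvent X μ σ C K)).toReal =
      (gaussianLinearModel μ σ (covSelEvent X μ σ C K)).toReal +
        (Dlt (rho X * zeta X μ σ / Real.sqrt (1 - rho X ^ 2)) K - Dlt 0 K) *
          Dlt (zeta X μ σ) C := by
  obtain ⟨a, ha⟩ : ∃ a, ∑ i, X i 0 ^ 2 = a := ⟨_, rfl⟩
  obtain ⟨b, hb⟩ : ∃ b, ∑ i, X i 0 * X i 1 = b := ⟨_, rfl⟩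
  obtain ⟨c, hc⟩ : ∃ c, ∑ i, X i 1 ^ 2 = c := ⟨_, rfl⟩
  have hd := gram_pos X hrank
  have hA := Ai_eq X ha hb hc
  rw [ha, hb, hc] at hd
  have ha0 : 0 ≤ a := ha ▸ Finset.sum_nonneg fun i _ => sq_nonneg _
  have hc0 : 0 ≤ c := hc ▸ Finset.sum_nonneg fun i _ => sq_nonneg _
  have hapos : 0 < a := by
    rcases ha0.eq_or_lt with h | h
    · rw [← h] at hd; nlinarith [sq_nonneg b]
    · exact h
  have hcpos : 0 < c := by
    rcases hc0.eq_or_lt with h | h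
    · rw [← h] at hd; nlinarith [sq_nonneg b]
    · exact h
  obtain ⟨d, hdd⟩ : ∃ d, a * c - b ^ 2 = d := ⟨_, rfl⟩
  rw [hdd] at hd hA
  -- the linear functionals
  let u : Fin n → ℝ := fun i => X i 0 / a
  let v : Fin n → ℝ := fun i => (-b * X i 0 + a * X i 1) / d
  have hu : ∀ y, bhat1 X y = ∑ i, u i * y i := by
    intro y
    rw [bhat1, ha, Finset.sum_div]
    exact Finset.sum_congr rfl fun i _ => by simp only [u]; ring
  have hv : ∀ y, bhat2 X y 1 = ∑ i, v i * y i := by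
    intro y
    rw [bhat2, hA]
    simp only [Matrix.mulVec, dotProduct, Matrix.mul_apply, Fin.sum_univ_two]
    exact Finset.sum_congr rfl fun i _ => by simp [v]; left; ring
  have hrel : ∀ y, bhat1 X y = bhat2 X y 0 + b / a * bhat2 X y 1 := by
    intro y
    rw [hu, bhat2, hA]
    simp only [Matrix.mulVec, dotProduct, Matrix.mul_apply, Fin.sum_univ_two]
    rw [Finset.mul_sum, ← Finset.sum_add_distrib]
    refine Finset.sum_congr rfl fun i _ => ?_
    simp [u]
    field_simp
    rw [← hdd]; ring
  have huv : ∑ i, u i * v i = 0 := by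
    have : ∀ i, u i * v i = (-b / (a * d)) * X i 0 ^ 2 + (1 / d) * (X i 0 * X i 1) := by
      intro i; simp only [u, v]; field_simp
    rw [Finset.sum_congr rfl fun i _ => this i, Finset.sum_add_distrib, ← Finset.mul_sum,
      ← Finset.mul_sum, ha, hb]
    field_simp; ring
  have huu : ∑ i, u i * u i = a⁻¹ := by
    have : ∀ i, u i * u i = (1 / a ^ 2) * X i 0 ^ 2 := by
      intro i; simp only [u]; field_simp
    rw [Finset.sum_congr rfl fun i _ => this i, ← Finset.mul_sum, ha]
    field_simp
  have hvv : ∑ i, v i * v i = a / d := by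
    have : ∀ i, v i * v i = (b ^ 2 / d ^ 2) * X i 0 ^ 2 + (-2 * a * b / d ^ 2) * (X i 0 * X i 1)
        + (a ^ 2 / d ^ 2) * X i 1 ^ 2 := by
      intro i; simp only [v]; field_simp; ring
    rw [Finset.sum_congr rfl fun i _ => this i, Finset.sum_add_distrib, Finset.sum_add_distrib,
      ← Finset.mul_sum, ← Finset.mul_sum, ← Finset.mul_sum, ha, hb, hc]
    field_simp
    rw [← hdd]; ring
  have hs1 : sd1M1 X σ = σ * Real.sqrt a⁻¹ := by rw [sd1M1, ha]
  have hs2 : sd2M2 X σ = σ * Real.sqrt (a / d) := by rw [sd2M2, hA]; simp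
  have hs1pos : 0 < sd1M1 X σ := by rw [hs1]; positivity
  have hs2pos : 0 < sd2M2 X σ := by rw [hs2]; positivity
  have hs1sq : σ ^ 2 * ∑ i, u i * u i = sd1M1 X σ ^ 2 := by
    rw [hs1, huu, mul_pow, Real.sq_sqrt (by positivity)]
  have hs2sq : σ ^ 2 * ∑ i, v i * v i = sd2M2 X σ ^ 2 := by
    rw [hs2, hvv, mul_pow, Real.sq_sqrt (by positivity)]
  -- probability of the part where the small model is selected
  have key : ∀ t, (gaussianLinearModel μ σ
      {y | |bhat1 X y - t| ≤ K * sd1M1 X σ ∧ |bhat2 X y 1 - 0| ≤ C * sd2M2 X σ}).toReal =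
      Dlt ((bhat1 X μ - t) / sd1M1 X σ) K * Dlt (zeta X μ σ) C := by
    intro t
    have := model_prod μ σ u v huv {x | |x - t| ≤ K * sd1M1 X σ} {x | |x - 0| ≤ C * sd2M2 X σ}
      (measurableSet_le (by fun_prop) (by fun_prop)) (measurableSet_le (by fun_prop) (by fun_prop))
    rw [hs1sq, hs2sq, interval_prob _ _ _ _ hs1pos hK, interval_prob _ _ _ _ hs2pos hC,
      ← hu, ← hv, sub_zero] at this
    simp only [Set.mem_ofPred_eq, ← hu, ← hv] at this
    exact this
  have hmean : (bhat1 X μ - bhat2 X μ 0) / sd1M1 X σ =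
      rho X * zeta X μ σ / Real.sqrt (1 - rho X ^ 2) := by
    have hrho : rho X = b / (Real.sqrt a * Real.sqrt c) := by
      have h1 : c / d * (a / d) = (Real.sqrt a * Real.sqrt c / d) ^ 2 := by
        rw [div_pow, mul_pow, Real.sq_sqrt ha0, Real.sq_sqrt hc0]; field_simp
      rw [rho, hA]
      simp only [Matrix.of_apply, Matrix.cons_val', Matrix.cons_val_zero, Matrix.cons_val_one,
        Matrix.cons_val_fin_one]
      rw [h1, Real.sqrt_sq (by positivity)]
      field_simp
    have hq : Real.sqrt (1 - rho X ^ 2) = Real.sqrt d / (Real.sqrt a * Real.sqrt c) := by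
      have : 1 - rho X ^ 2 = (Real.sqrt d / (Real.sqrt a * Real.sqrt c)) ^ 2 := by
        rw [hrho, div_pow, div_pow, mul_pow, Real.sq_sqrt ha0, Real.sq_sqrt hc0,
          Real.sq_sqrt hd.le, ← hdd]
        field_simp
      rw [this, Real.sqrt_sq (by positivity)]
    rw [hq, hrho, zeta, hs1, hs2, hrel, Real.sqrt_inv, Real.sqrt_div ha0]
    have hsa : Real.sqrt a ^ 2 = a := Real.sq_sqrt ha0
    have h1 : 0 < Real.sqrt a := Real.sqrt_pos.2 hapos
    have h2 : 0 < Real.sqrt c := Real.sqrt_pos.2 hcpos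
    have h3 : 0 < Real.sqrt d := Real.sqrt_pos.2 hd
    field_simp
    rw [hsa]
    ring
  have k1 := key (bhat2 X μ 0)
  have k2 := key (bhat1 X μ)
  rw [hmean] at k1
  rw [sub_self, zero_div] at k2
  -- split on the selection event
  let S : Set (Fin n → ℝ) := {y | |bhat2 X y 1| / sd2M2 X σ > C}
  have hS : MeasurableSet S := by
    have : S = {y | C < |∑ i, v i * y i| / sd2M2 X σ} := by
      ext y; simp only [S, Set.mem_ofPred_eq, hv, gt_iff_lt]
    rw [this]
    exact measurableSet_lt (by fun_prop) (by fun_prop)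
  have split : ∀ E : Set (Fin n → ℝ), (gaussianLinearModel μ σ E).toReal =
      (gaussianLinearModel μ σ (E ∩ S)).toReal + (gaussianLinearModel μ σ (E \ S)).toReal := by
    intro E
    rw [← ENNReal.toReal_add (measure_ne_top _ _) (measure_ne_top _ _), measure_inter_add_sdiff _ hS]
  have hnot : ∀ y, ¬ (|bhat2 X y 1| / sd2M2 X σ > C) ↔ |bhat2 X y 1 - 0| ≤ C * sd2M2 X σ := by
    intro y
    rw [gt_iff_lt, not_lt, div_le_iff₀ hs2pos, sub_zero]
  have e1 : covFullEvent X μ σ C K \ S =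
      {y | |bhat1 X y - bhat2 X μ 0| ≤ K * sd1M1 X σ ∧ |bhat2 X y 1 - 0| ≤ C * sd2M2 X σ} := by
    ext y
    simp only [covFullEvent, S, Set.mem_sdiff, Set.mem_ofPred_eq, ← hnot]
    split_ifs with h <;> simp [h]
  have e2 : covSelEvent X μ σ C K \ S =
      {y | |bhat1 X y - bhat1 X μ| ≤ K * sd1M1 X σ ∧ |bhat2 X y 1 - 0| ≤ C * sd2M2 X σ} := by
    ext y
    simp only [covSelEvent, S, Set.mem_sdiff, Set.mem_ofPred_eq, ← hnot]
    split_ifs with h <;> simp [h]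
  have e3 : covFullEvent X μ σ C K ∩ S = covSelEvent X μ σ C K ∩ S := by
    ext y
    simp only [covSelEvent, covFullEvent, S, Set.mem_inter_iff, Set.mem_ofPred_eq]
    split_ifs with h <;> simp [h]
  rw [split (covFullEvent X μ σ C K), split (covSelEvent X μ σ C K), e1, e2, e3, k1, k2]
  ring
end
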